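/- arXiv:1703.01044 — 2 statements merged into one kernel-verified Lean document; each statement's English description precedes it below -/
import Mathlib

section
/- Let n ≥ 1 and k ≥ 1 be integers, let R₁, …, R_{k−1} be nonnegative integers with R₁ + ⋯ + R_{k−1} ≤ n − k, and set γ_v = n − v + 1 − Σ_{u=1}^{v−1} R_u for 1 ≤ v ≤ k (so γ_k ≥ 1). Let θ > 0, T > 0, let i be an integer with 1 ≤ i ≤ k, and let t be a real number with t/i < 1/θ; write s = 1/θ − t/i > 0. Then ∫_{0 < z₁ < ⋯ < z_{k−1} < z_k, z_k > T} exp(−s(Σ_{h=1}^{k−1} z_h (1 + R_h) + z_k γ_k)) dz₁ ⋯ dz_k = s^{−k} Σ_{v=0}^{k−1} (−1)^v e^{−s T γ_{k−v}} / [ (∏_{j=1}^{v} (γ_{k−v} − γ_{k−v+j})) (∏_{j=1}^{k−1−v} (γ_j − γ_{k−v})) · γ_{k−v} ]. (This identity is the computational content of the conditional moment generating function of θ̂₁ given T < Z_{k:m:n} < Z_{m:m:n} and D₁ = i.) -/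
open MeasureTheory

/-- `γ_v = n − v + 1 − Σ_{u=1}^{v−1} R_u`, the number of surviving units at the time of the
`v`-th failure in a progressive censoring scheme with removals `R 1, R 2, …`. -/
noncomputable def gam (n : ℕ) (R : ℕ → ℕ) (v : ℕ) : ℝ :=
  (n : ℝ) - v + 1 - ∑ u ∈ Finset.Icc 1 (v - 1), (R u : ℝ)

open Finset in
lemma lag (g : ℕ → ℝ) (m : ℕ) (hg : Function.Injective g) :
   ∑ v ∈ range m, (∏ j ∈ (range m).erase v, (g j - g v))⁻¹ * (g v - g m)⁻¹ = if m = 0 then 0 else (∏ j ∈ range m, (g j - g m))⁻¹ := by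
  split_ifs with h0
  · simp [h0]
  have hm : (range m).Nonempty := by simpa using h0
  have h := congrArg (Polynomial.eval (g m)) (Lagrange.sum_basis (s := range m) (v := g) hg.injOn hm)
  simp only [Polynomial.eval_finsetSum, Lagrange.basis, Lagrange.basisDivisor, Polynomial.eval_prod, Polynomial.eval_mul, Polynomial.eval_sub, Polynomial.eval_C, Polynomial.eval_X, Polynomial.eval_one] at h
  have hne : ∀ i j, i ≠ j → g i - g j ≠ 0 := fun i j hij => sub_ne_zero.2 (hg.ne hij)
  have hP : ∏ j ∈ range m, (g j - g m) ≠ 0 := prod_ne_zero_iff.2 fun j hj => hne _ _ (by simp at hj; omega)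
  refine eq_inv_of_mul_eq_one_left ?_
  rw [← h, sum_mul]
  refine sum_congr rfl fun v hv => ?_
  rw [← mul_prod_erase _ _ hv]
  have : g v - g m ≠ 0 := hne _ _ (by simp at hv; omega)
  rw [← mul_assoc, mul_assoc _ _ (g v - g m), inv_mul_cancel₀ this, mul_one, ← prod_inv_distrib, ← prod_mul_distrib]
  refine prod_congr rfl fun j hj => ?_
  rw [← neg_sub (g v) (g j), ← neg_sub (g m) (g j), inv_neg, neg_mul_neg]

lemma snoc_sm {m : ℕ} (w : Fin m → ℝ) (y : ℝ) : StrictMono (Fin.snoc w y : Fin (m+1) → ℝ) ↔ StrictMono w ∧ ∀ h, w h < y := by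
  constructor
  · intro H
    refine ⟨fun a b hab => ?_, fun a => ?_⟩
    · simpa using H (show a.castSucc < b.castSucc by simpa)
    · simpa using H (Fin.castSucc_lt_last a)
  · rintro ⟨h1, h2⟩ a b hab
    induction b using Fin.lastCases with
    | last =>
      induction a using Fin.lastCases with
      | last => simp at hab
      | cast a => simpa using h2 a
    | cast b =>
      induction a using Fin.lastCases with
      | last => exact absurd hab (by simp [Fin.le_last])
      | cast a => simpa using h1 (by simpa using hab)

def SS (m : ℕ) (y : ℝ) : Set (Fin m → ℝ) := {w | StrictMono w ∧ (∀ h, 0 < w h) ∧ ∀ h, w h < y}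

lemma meas_sm (m : ℕ) : MeasurableSet {w : Fin m → ℝ | StrictMono w} := by
  have : {w : Fin m → ℝ | StrictMono w} = ⋂ i, ⋂ j, ⋂ (_ : i < j), {w | w i < w j} := by
    ext w; simp [StrictMono]
  rw [this]
  exact MeasurableSet.iInter fun i => MeasurableSet.iInter fun j => MeasurableSet.iInter fun _ =>
    measurableSet_lt (measurable_pi_apply i) (measurable_pi_apply j)

lemma meas_pos (m : ℕ) : MeasurableSet {w : Fin m → ℝ | ∀ h, 0 < w h} := by
  rw [Set.ofPred_forall]
  exact MeasurableSet.iInter fun i => measurableSet_lt measurable_const (measurable_pi_apply i)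

lemma meas_lt (m : ℕ) (y : ℝ) : MeasurableSet {w : Fin m → ℝ | ∀ h, w h < y} := by
  rw [Set.ofPred_forall]
  exact MeasurableSet.iInter fun i => measurableSet_lt (measurable_pi_apply i) measurable_const

lemma meas_SS (m : ℕ) (y : ℝ) : MeasurableSet (SS m y) :=
  (meas_sm m).inter ((meas_pos m).inter (meas_lt m y))

lemma meas_B (m : ℕ) (B : Set ℝ) (hB : MeasurableSet B) : MeasurableSet
   {z : Fin (m+1) → ℝ | StrictMono z ∧ (∀ h, 0 < z h) ∧ z (Fin.last m) ∈ B} :=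
  (meas_sm _).inter ((meas_pos _).inter (measurable_pi_apply (Fin.last m) hB))

open ENNReal in
lemma step (m : ℕ) (B : Set ℝ) (hB : MeasurableSet B) (E : (Fin m → ℝ) → ℝ≥0∞) (hE : Measurable E)
   (φ : ℝ → ℝ≥0∞) (hφ : Measurable φ) :
   ∫⁻ z in {z : Fin (m+1) → ℝ | StrictMono z ∧ (∀ h, 0 < z h) ∧ z (Fin.last m) ∈ B},
     E (fun h => z h.castSucc) * φ (z (Fin.last m)) =
   ∫⁻ y in Set.Ioi 0 ∩ B, φ y * ∫⁻ w in SS m y, E w := by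
  have hS := meas_B m B hB
  have mp := (volume_preserving_piFinSuccAbove (fun _ : Fin (m+1) => ℝ) (Fin.last m)).symm
  have hF : Measurable (fun z : Fin (m+1) → ℝ => E (fun h => z h.castSucc) * φ (z (Fin.last m))) := by
    refine (hE.comp ?_).mul (hφ.comp (measurable_pi_apply _))
    exact measurable_pi_lambda _ fun h => measurable_pi_apply _
  rw [← lintegral_indicator hS, ← mp.lintegral_comp_emb (MeasurableEquiv.measurableEmbedding _), Measure.volume_eq_prod, lintegral_prod _ (Measurable.aemeasurable (by exact (hF.indicator hS).comp (MeasurableEquiv.measurable _))), ← lintegral_indicator (measurableSet_Ioi.inter hB)]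
  refine lintegral_congr fun y => ?_
  have key : ∀ w : Fin m → ℝ, (MeasurableEquiv.piFinSuccAbove (fun _ : Fin (m+1) => ℝ) (Fin.last m)).symm (y, w) = Fin.snoc w y := by
    intro w
    simp [MeasurableEquiv.piFinSuccAbove, Fin.insertNthEquiv]
  simp only [key]
  by_cases hy : y ∈ Set.Ioi 0 ∩ B
  · rw [Set.indicator_of_mem hy, ← lintegral_const_mul _ hE, ← lintegral_indicator (meas_SS m y)]
    refine lintegral_congr fun w => ?_
    have : (Fin.snoc w y : Fin (m+1) → ℝ) ∈ {z : Fin (m+1) → ℝ | StrictMono z ∧ (∀ h, 0 < z h) ∧ z (Fin.last m) ∈ B} ↔ w ∈ SS m y := by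
      have h1 : 0 < y := hy.1
      have h2 := hy.2
      simp [snoc_sm, SS, Fin.forall_fin_succ', h1, h2]
      tauto
    by_cases hw : w ∈ SS m y
    · rw [Set.indicator_of_mem hw, Set.indicator_of_mem (this.2 hw)]
      simp [mul_comm]
    · rw [Set.indicator_of_notMem hw, Set.indicator_of_notMem (mt this.1 hw)]
  · rw [Set.indicator_of_notMem hy]
    refine (lintegral_congr (g := fun _ => 0) fun w => ?_).trans lintegral_zero
    refine Set.indicator_of_notMem (fun h => hy ⟨?_, ?_⟩) _
    · simpa using h.2.1 (Fin.last m)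
    · simpa using h.2.2

open Finset in
noncomputable def cc (g : ℕ → ℝ) (m v : ℕ) : ℝ := (∏ j ∈ (range (m+1)).erase v, (g j - g v))⁻¹

noncomputable def FF (g : ℕ → ℝ) (s : ℝ) (m : ℕ) (x : ℝ) : ℝ :=
  (s⁻¹)^m * ∑ v ∈ Finset.range (m+1), cc g m v * Real.exp (-s * x * (g v - g m))

open Finset in
lemma cc_succ (g : ℕ → ℝ) (m v : ℕ) (hv : v < m + 1) :
    cc g (m+1) v = cc g m v * (g (m+1) - g v)⁻¹ := by
  unfold cc
  rw [range_add_one (n := m+1), erase_insert_of_ne (by omega), prod_insert (by simp), mul_inv, mul_comm]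

open Finset in
lemma sum_cc (g : ℕ → ℝ) (hg : Function.Injective g) (m : ℕ) :
    ∑ v ∈ range (m+2), cc g (m+1) v = 0 := by
  rw [sum_range_succ]
  have h1 : cc g (m+1) (m+1) = (∏ j ∈ range (m+1), (g j - g (m+1)))⁻¹ := by
    unfold cc
    rw [range_add_one (n := m+1), erase_insert (by simp)]
  have h2 := lag g (m+1) hg
  rw [if_neg (by omega)] at h2
  rw [h1, ← h2, ← sum_add_distrib]
  refine sum_eq_zero fun v hv => ?_
  rw [cc_succ _ _ _ (by simpa using hv), ← neg_sub (g v), inv_neg]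
  unfold cc
  ring

open Finset in
lemma FF_deriv (g : ℕ → ℝ) (hg : Function.Injective g) (s : ℝ) (hs : 0 < s) (m : ℕ) (x : ℝ) :
    HasDerivAt (FF g s (m+1)) (Real.exp (-s * x * (g m - g (m+1))) * FF g s m x) x := by
  have h : HasDerivAt (FF g s (m+1)) ((s⁻¹)^(m+1) * ∑ v ∈ range (m+2), cc g (m+1) v * (Real.exp (-s * x * (g v - g (m+1))) * (-s * (g v - g (m+1))))) x := by
    unfold FF
    refine HasDerivAt.const_mul _ (HasDerivAt.fun_sum fun v _ => HasDerivAt.const_mul _ (HasDerivAt.exp ?_))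
    have := ((hasDerivAt_id x).const_mul (-s)).mul_const (g v - g (m+1))
    simpa using this
  convert h using 1
  rw [sum_range_succ]
  unfold FF
  simp only [sub_self, mul_zero, add_zero]
  rw [mul_left_comm, pow_succ, mul_assoc (s⁻¹ ^ m), mul_sum _ _ s⁻¹, mul_sum _ _ (Real.exp _)]
  congr 1
  refine sum_congr rfl fun v hv => ?_
  have hv' : v < m + 1 := by simpa using hv
  have hne : g (m+1) - g v ≠ 0 := sub_ne_zero.2 (hg.ne (by omega))
  rw [cc_succ _ _ _ hv']
  have e : Real.exp (-s * x * (g v - g (m+1))) = Real.exp (-s * x * (g m - g (m+1))) * Real.exp (-s * x * (g v - g m)) := by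
    rw [← Real.exp_add]; ring_nf
  rw [e]
  field_simp
  ring

lemma FF_zero (g : ℕ → ℝ) (hg : Function.Injective g) (s : ℝ) (m : ℕ) : FF g s (m+1) 0 = 0 := by
  simp [FF, sum_cc g hg m]

lemma FF_cont (g : ℕ → ℝ) (s : ℝ) (m : ℕ) : Continuous (FF g s m) := by
  unfold FF; fun_prop

lemma JJ (g : ℕ → ℝ) (hg : Function.Injective g) (s : ℝ) (hs : 0 < s) (m : ℕ) :
    ∀ x, 0 < x → 0 ≤ FF g s m x ∧
      ∫⁻ w in SS m x, ENNReal.ofReal (Real.exp (-s * ∑ h : Fin m, w h * (g h - g (h+1)))) =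
        ENNReal.ofReal (FF g s m x) := by
  induction m with
  | zero =>
    intro x hx
    have h1 : FF g s 0 x = 1 := by simp [FF, cc]
    have h2 : SS 0 x = Set.univ := by
      ext w; simp [SS, Subsingleton.strictMono]
    rw [h1, h2]
    simp [volume_pi]
  | succ m ih =>
    intro x hx
    have hc : Continuous fun y => Real.exp (-s * y * (g m - g (m+1))) * FF g s m y :=
      (by fun_prop : Continuous fun y => Real.exp (-s * y * (g m - g (m+1)))).mul (FF_cont g s m)
    have hI : FF g s (m+1) x = ∫ y in Set.Ioo 0 x, Real.exp (-s * y * (g m - g (m+1))) * FF g s m y := by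
      rw [← integral_Ioc_eq_integral_Ioo, ← intervalIntegral.integral_of_le hx.le,
        intervalIntegral.integral_eq_sub_of_hasDerivAt (fun y _ => FF_deriv g hg s hs m y) (hc.intervalIntegrable _ _), FF_zero g hg, sub_zero]
    have hnn : ∀ y ∈ Set.Ioo 0 x, 0 ≤ Real.exp (-s * y * (g m - g (m+1))) * FF g s m y :=
      fun y hy => mul_nonneg (Real.exp_pos _).le (ih y hy.1).1
    refine ⟨hI ▸ setIntegral_nonneg measurableSet_Ioo hnn, ?_⟩
    have hset : SS (m+1) x = {z : Fin (m+1) → ℝ | StrictMono z ∧ (∀ h, 0 < z h) ∧ z (Fin.last m) ∈ Set.Iio x} := by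
      ext z
      refine ⟨fun h => ⟨h.1, h.2.1, h.2.2 _⟩, fun h => ⟨h.1, h.2.1, fun i => (h.1.monotone (Fin.le_last i)).trans_lt h.2.2⟩⟩
    have hst := step m (Set.Iio x) measurableSet_Iio
      (fun w => ENNReal.ofReal (Real.exp (-s * ∑ h : Fin m, w h * (g h - g (h+1))))) (by fun_prop)
      (fun y => ENNReal.ofReal (Real.exp (-s * y * (g m - g (m+1))))) (by fun_prop)
    rw [hset, hI, ofReal_integral_eq_lintegral_ofReal]
    · convert hst using 1
      · refine lintegral_congr fun z => ?_
        rw [← ENNReal.ofReal_mul (Real.exp_pos _).le, ← Real.exp_add, Fin.sum_univ_castSucc]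
        simp only [Fin.val_castSucc, Fin.val_last]
        ring_nf
      · refine setLIntegral_congr_fun measurableSet_Ioo fun y hy => ?_
        rw [(ih y hy.1).2, ENNReal.ofReal_mul (Real.exp_pos _).le]
    · exact (hc.integrableOn_Icc (a := 0) (b := x)).mono_set Set.Ioo_subset_Icc_self
    · exact (ae_restrict_iff' measurableSet_Ioo).2 (Filter.Eventually.of_forall hnn)

lemma final (g : ℕ → ℝ) (hg : Function.Injective g) (s : ℝ) (hs : 0 < s) (m : ℕ)
    (hp : ∀ v < m + 1, 0 < g v) (T : ℝ) (hT : 0 < T) :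
    ∫ z in {z : Fin (m+1) → ℝ | StrictMono z ∧ (∀ h, 0 < z h) ∧ T < z (Fin.last m)},
      Real.exp (-s * ((∑ h : Fin m, z h.castSucc * (g h - g (h+1))) + z (Fin.last m) * g m)) =
    (s⁻¹)^(m+1) * ∑ v ∈ Finset.range (m+1), cc g m v * (Real.exp (-s * T * g v) / g v) := by
  have hst := step m (Set.Ioi T) measurableSet_Ioi
      (fun w => ENNReal.ofReal (Real.exp (-s * ∑ h : Fin m, w h * (g h - g (h+1))))) (by fun_prop)
      (fun y => ENNReal.ofReal (Real.exp (-s * y * g m))) (by fun_prop)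
  have hset : Set.Ioi 0 ∩ Set.Ioi T = Set.Ioi T := by
    rw [Set.inter_eq_right]; exact Set.Ioi_subset_Ioi hT.le
  rw [hset] at hst
  have hfun : ∀ y, Real.exp (-s * y * g m) * FF g s m y = (s⁻¹)^m * ∑ v ∈ Finset.range (m+1), cc g m v * Real.exp ((-s * g v) * y) := by
    intro y
    unfold FF
    rw [mul_left_comm, Finset.mul_sum]
    congr 1
    refine Finset.sum_congr rfl fun v _ => ?_
    rw [mul_left_comm, ← Real.exp_add]
    ring_nf
  have hneg : ∀ v ∈ Finset.range (m+1), -s * g v < 0 := fun v hv => by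
    have := mul_pos hs (hp v (by simpa using hv)); linarith
  have hint : ∀ v ∈ Finset.range (m+1), IntegrableOn (fun y => cc g m v * Real.exp ((-s * g v) * y)) (Set.Ioi T) :=
    fun v hv => (integrableOn_exp_mul_Ioi (hneg v hv) T).const_mul _
  have hI : IntegrableOn (fun y => Real.exp (-s * y * g m) * FF g s m y) (Set.Ioi T) := by
    simp only [hfun]
    exact (integrable_finsetSum _ hint).const_mul _
  have hnn : ∀ y ∈ Set.Ioi T, 0 ≤ Real.exp (-s * y * g m) * FF g s m y :=
      fun y hy => mul_nonneg (Real.exp_pos _).le (JJ g hg s hs m y (hT.trans hy)).1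
  have hval : ∫ y in Set.Ioi T, Real.exp (-s * y * g m) * FF g s m y = (s⁻¹)^(m+1) * ∑ v ∈ Finset.range (m+1), cc g m v * (Real.exp (-s * T * g v) / g v) := by
    simp only [hfun]
    rw [integral_const_mul, integral_finsetSum _ hint, pow_succ, mul_assoc, Finset.mul_sum _ _ s⁻¹]
    congr 1
    refine Finset.sum_congr rfl fun v hv => ?_
    rw [integral_const_mul, integral_exp_mul_Ioi (hneg v hv)]
    have := (hp v (by simpa using hv)).ne'
    rw [show -s * g v * T = -s * T * g v by ring]
    field_simp
  rw [integral_eq_lintegral_of_nonneg_ae (Filter.Eventually.of_forall fun _ => (Real.exp_pos _).le) (by fun_prop)]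
  rw [← hval, ← ENNReal.toReal_ofReal (setIntegral_nonneg measurableSet_Ioi hnn)]
  congr 1
  rw [ofReal_integral_eq_lintegral_ofReal hI ((ae_restrict_iff' measurableSet_Ioi).2 (Filter.Eventually.of_forall hnn))]
  convert hst using 1
  · refine lintegral_congr fun z => ?_
    rw [← ENNReal.ofReal_mul (Real.exp_pos _).le, ← Real.exp_add]
    ring_nf
  · refine setLIntegral_congr_fun measurableSet_Ioi fun y hy => ?_
    rw [(JJ g hg s hs m y (hT.trans hy)).2, ENNReal.ofReal_mul (Real.exp_pos _).le]

open Finset in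
lemma cc_eq (g : ℕ → ℝ) (w v : ℕ) :
    cc g (w+v) w = (-1)^v / ((∏ j ∈ Icc 1 v, (g w - g (w+j))) * ∏ j ∈ range w, (g j - g w)) := by
  induction v with
  | zero =>
    unfold cc
    rw [add_zero, range_add_one, erase_insert (by simp)]
    simp
  | succ v ih =>
    rw [← add_assoc, cc_succ _ _ _ (by omega), ih, prod_Icc_succ_top (by omega), ← neg_sub (g w), pow_succ, inv_neg]
    simp only [div_eq_mul_inv, mul_inv, add_assoc]
    ring

lemma gam_succ (n : ℕ) (R : ℕ → ℕ) (j : ℕ) : gam n R (j+1+1) = gam n R (j+1) - (1 + (R (j+1) : ℝ)) := by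
  unfold gam
  simp only [Nat.add_sub_cancel]
  rw [Finset.sum_Icc_succ_top (by omega)]
  push_cast
  ring

lemma prod_shift (w : ℕ) (f : ℕ → ℝ) : ∏ j ∈ Finset.Icc 1 w, f j = ∏ j ∈ Finset.range w, f (j+1) := by
  induction w with
  | zero => simp
  | succ w ih => rw [Finset.prod_Icc_succ_top (by omega), ih, Finset.prod_range_succ]

/-- The iterated integral over `{0 < z₁ < ⋯ < z_k, z_k > T}` of
`exp(−s(Σ_{h=1}^{k−1} z_h (1 + R_h) + z_k γ_k))` equals
`s^{−k} Σ_{v=0}^{k−1} (−1)^v e^{−s T γ_{k−v}} / [⋯ γ_{k−v}]`; this is the computational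
content of the conditional MGF of `θ̂₁` given `T < Z_{k:m:n} < Z_{m:m:n}`, `D₁ = i`. -/
theorem mgf_integral_case_Zk (n k : ℕ) (hn : 1 ≤ n) (hk : 1 ≤ k) (R : ℕ → ℕ)
    (hR : (∑ u ∈ Finset.Icc 1 (k - 1), R u) + k ≤ n)
    (θ T : ℝ) (hθ : 0 < θ) (hT : 0 < T)
    (i : ℕ) (hi1 : 1 ≤ i) (hik : i ≤ k)
    (t s : ℝ) (ht : t / i < 1 / θ) (hs : s = 1 / θ - t / i) :
    ∫ z in {z : Fin k → ℝ | StrictMono z ∧ (∀ h, 0 < z h) ∧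
        T < z ⟨k - 1, Nat.sub_lt (by omega) Nat.one_pos⟩},
        Real.exp (-s * ((∑ h : Fin (k - 1),
            z ⟨h.1, lt_of_lt_of_le h.2 (Nat.sub_le k 1)⟩ * (1 + (R (h.1 + 1) : ℝ))) +
          z ⟨k - 1, Nat.sub_lt (by omega) Nat.one_pos⟩ * gam n R k)) =
      s ^ (-(k : ℤ)) *
        ∑ v ∈ Finset.range k,
          (-1 : ℝ) ^ v * Real.exp (-s * T * gam n R (k - v)) /
            ((∏ j ∈ Finset.Icc 1 v, (gam n R (k - v) - gam n R (k - v + j))) *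
              (∏ j ∈ Finset.Icc 1 (k - 1 - v), (gam n R j - gam n R (k - v))) *
              gam n R (k - v)) := by
  have hs0 : 0 < s := by rw [hs]; linarith
  obtain ⟨m, rfl⟩ : ∃ m, k = m + 1 := ⟨k - 1, by omega⟩
  have hanti : StrictAnti (fun j => gam n R (j+1)) := by
    refine strictAnti_nat_of_succ_lt fun j => ?_
    rw [gam_succ]
    have : (0:ℝ) ≤ R (j+1) := Nat.cast_nonneg _
    linarith
  have hpos : ∀ v < m + 1, 0 < gam n R (v+1) := by
    intro v hv
    refine lt_of_lt_of_le ?_ (hanti.antitone (show v ≤ m by omega))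
    have h2 : (((∑ u ∈ Finset.Icc 1 m, R u) + (m + 1) : ℕ) : ℝ) ≤ n := by exact_mod_cast hR
    push_cast at h2
    simp only [gam, Nat.add_sub_cancel]
    push_cast
    linarith
  have hfin := final (fun j => gam n R (j+1)) hanti.injective s hs0 m hpos T hT
  simp only [gam_succ, sub_sub_cancel] at hfin
  refine Eq.trans hfin ?_
  rw [zpow_neg, zpow_natCast, inv_pow, ← Finset.sum_range_reflect]
  congr 1
  refine Finset.sum_congr rfl fun v hv => ?_
  obtain ⟨w, rfl⟩ : ∃ w, m = w + v := ⟨m - v, by have := Finset.mem_range.1 hv; omega⟩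
  have e1 : w + v + 1 - 1 - v = w := by omega
  have e2 : w + v + 1 - v = w + 1 := by omega
  rw [e1, e2, cc_eq, prod_shift w (fun j => gam n R j - gam n R (w+1))]
  simp only [div_eq_mul_inv, mul_inv, add_right_comm w]
  ring
end

section
/- Let f : ℝ → [0, ∞) be a Lebesgue-integrable probability density with cumulative distribution function F(x) = ∫_{−∞}^{x} f(t) dt, let r ≥ 1 be an integer, let a₁, …, a_r > 0 be reals, and let T < x_{r+1} be reals. Then ∫_{T < x₁ < x₂ < ⋯ < x_r < x_{r+1}} ∏_{j=1}^{r} f(x_j)(1 − F(x_j))^{a_j − 1} dx₁ ⋯ dx_r = Σ_{i=0}^{r} c_{i,r}(a) (1 − F(x_{r+1}))^{b_{i,r}(a)} (1 − F(T))^{Σ_{j=1}^{r−i} a_j}, where b_{i,r}(a) = Σ_{j=r−i+1}^{r} a_j and c_{i,r}(a) = (−1)^i / [ (∏_{j=1}^{i} Σ_{k=r−i+1}^{r−i+j} a_k) (∏_{j=1}^{r−i} Σ_{k=j}^{r−i} a_k) ], with the conventions that an empty product equals 1 and an empty sum equals 0. -/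
open MeasureTheory

lemma bcc_F_sub (f : ℝ → ℝ) (hfi : Integrable f)
    (F : ℝ → ℝ) (hF : ∀ x, F x = ∫ t in Set.Iic x, f t) (u v : ℝ) :
    F v - F u = ∫ t in u..v, f t := by
  rw [hF, hF, intervalIntegral.integral_Iic_sub_Iic hfi.integrableOn hfi.integrableOn]

lemma bcc_F_cont (f : ℝ → ℝ) (hfi : Integrable f)
    (F : ℝ → ℝ) (hF : ∀ x, F x = ∫ t in Set.Iic x, f t) : Continuous F := by
  have h : F = fun v => F 0 + ∫ t in (0:ℝ)..v, f t := by
    funext v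
    rw [← bcc_F_sub f hfi F hF]; ring
  rw [h]
  exact continuous_const.add
    (intervalIntegral.continuous_primitive (fun a b => hfi.intervalIntegrable) 0)

lemma bcc_F_mono (f : ℝ → ℝ) (hf0 : ∀ x, 0 ≤ f x) (hfi : Integrable f)
    (F : ℝ → ℝ) (hF : ∀ x, F x = ∫ t in Set.Iic x, f t) : Monotone F := by
  intro u v huv
  have := bcc_F_sub f hfi F hF u v
  have h2 : 0 ≤ ∫ t in u..v, f t := intervalIntegral.integral_nonneg huv (fun t _ => hf0 t)
  linarith

lemma bcc_F_le_one (f : ℝ → ℝ) (hf0 : ∀ x, 0 ≤ f x) (hfi : Integrable f)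
    (hf1 : ∫ x, f x = 1)
    (F : ℝ → ℝ) (hF : ∀ x, F x = ∫ t in Set.Iic x, f t) (x : ℝ) : F x ≤ 1 := by
  rw [hF, ← hf1]
  exact setIntegral_le_integral hfi (ae_of_all _ hf0)

lemma bcc_meas_Ioc (f : ℝ → ℝ) (hf0 : ∀ x, 0 ≤ f x) (hfi : Integrable f)
    (F : ℝ → ℝ) (hF : ∀ x, F x = ∫ t in Set.Iic x, f t) (u v : ℝ) (huv : u ≤ v) :
    (volume.withDensity (fun x => ENNReal.ofReal (f x))) (Set.Ioc u v)
      = ENNReal.ofReal (F v - F u) := by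
  rw [withDensity_apply _ measurableSet_Ioc, bcc_F_sub f hfi F hF,
    intervalIntegral.integral_of_le huv,
    ofReal_integral_eq_lintegral_ofReal hfi.integrableOn (ae_of_all _ hf0)]

lemma bcc_map (f : ℝ → ℝ) (hf0 : ∀ x, 0 ≤ f x) (hfi : Integrable f)
    (F : ℝ → ℝ) (hF : ∀ x, F x = ∫ t in Set.Iic x, f t) (u v : ℝ) (huv : u ≤ v) :
    ((volume.restrict (Set.Ioc u v)).withDensity (fun x => ENNReal.ofReal (f x))).map F
      = volume.restrict (Set.Ioc (F u) (F v)) := by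
  have hc := bcc_F_cont f hfi F hF
  have hm := bcc_F_mono f hf0 hfi F hF
  have : IsFiniteMeasure (volume.withDensity (fun x => ENNReal.ofReal (f x))) :=
    isFiniteMeasure_withDensity_ofReal hfi.2
  rw [← restrict_withDensity measurableSet_Ioc]
  apply Measure.ext_of_Iic
  intro y
  rw [Measure.map_apply hc.measurable measurableSet_Iic,
    Measure.restrict_apply (hc.measurable measurableSet_Iic),
    Measure.restrict_apply measurableSet_Iic]
  rcases lt_or_ge y (F u) with h | h
  · have e1 : F ⁻¹' Set.Iic y ∩ Set.Ioc u v = ∅ := by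
      ext x
      simp only [Set.mem_inter_iff, Set.mem_preimage, Set.mem_Iic, Set.mem_Ioc,
        Set.mem_empty_iff_false, iff_false]
      rintro ⟨h1, h2, -⟩
      have := hm h2.le
      linarith
    have e2 : Set.Iic y ∩ Set.Ioc (F u) (F v) = ∅ := by
      ext x
      simp only [Set.mem_inter_iff, Set.mem_Iic, Set.mem_Ioc,
        Set.mem_empty_iff_false, iff_false]
      rintro ⟨h1, h2, -⟩
      linarith
    rw [e1, e2]; simp
  rcases le_or_gt (F v) y with h' | h'
  · have e1 : F ⁻¹' Set.Iic y ∩ Set.Ioc u v = Set.Ioc u v := by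
      apply Set.inter_eq_right.2
      intro x hx
      exact (hm hx.2).trans h'
    have e2 : Set.Iic y ∩ Set.Ioc (F u) (F v) = Set.Ioc (F u) (F v) := by
      apply Set.inter_eq_right.2
      intro x hx
      exact hx.2.trans h'
    rw [e1, e2, bcc_meas_Ioc f hf0 hfi F hF u v huv, Real.volume_Ioc]
  · have hcomp : IsCompact (Set.Icc u v ∩ F ⁻¹' Set.Iic y) :=
      isCompact_Icc.inter_right (isClosed_Iic.preimage hc)
    obtain ⟨z, ⟨⟨huz, hzv⟩, hzy⟩, hz⟩ := hcomp.exists_isGreatest ⟨u, ⟨le_refl _, huv⟩, h⟩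
    have hzy' : F z = y := by
      obtain ⟨w, hw, hwy⟩ := intermediate_value_Icc hzv hc.continuousOn ⟨hzy, h'.le⟩
      have : w ≤ z := hz ⟨⟨huz.trans hw.1, hw.2⟩, hwy.le⟩
      rw [le_antisymm hw.1 this, hwy]
    have e1 : F ⁻¹' Set.Iic y ∩ Set.Ioc u v = Set.Ioc u z := by
      ext x
      constructor
      · rintro ⟨h1, h2, h3⟩
        exact ⟨h2, hz ⟨⟨h2.le, h3⟩, h1⟩⟩
      · rintro ⟨h1, h2⟩
        exact ⟨(hm h2).trans hzy, h1, h2.trans hzv⟩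
    have e2 : Set.Iic y ∩ Set.Ioc (F u) (F v) = Set.Ioc (F u) y := by
      ext x
      constructor
      · rintro ⟨h1, h2, h3⟩
        exact ⟨h2, h1⟩
      · rintro ⟨h1, h2⟩
        exact ⟨h2, h1, h2.trans h'.le⟩
    rw [e1, e2, bcc_meas_Ioc f hf0 hfi F hF u z huz, Real.volume_Ioc, hzy']

lemma bcc_one_dim (f : ℝ → ℝ) (hf0 : ∀ x, 0 ≤ f x) (hfi : Integrable f)
    (hf1 : ∫ x, f x = 1)
    (F : ℝ → ℝ) (hF : ∀ x, F x = ∫ t in Set.Iic x, f t) (u v : ℝ) (huv : u ≤ v)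
    (c : ℝ) (hc : 0 < c) (g : ℝ → ℝ) (hg : ∀ y, 0 < y → g y = y ^ (c - 1)) :
    IntegrableOn (fun x => f x * g (1 - F x)) (Set.Ioo u v) ∧
    ∫ x in Set.Ioo u v, f x * g (1 - F x) = ((1 - F u) ^ c - (1 - F v) ^ c) / c := by
  have hcont := bcc_F_cont f hfi F hF
  have hle := bcc_F_mono f hf0 hfi F hF huv
  have hmap := bcc_map f hf0 hfi F hF u v huv
  have hv1 := bcc_F_le_one f hf0 hfi hf1 F hF v
  have hae : (fun y => (1 - y) ^ (c - 1)) =ᵐ[volume.restrict (Set.Ioc (F u) (F v))]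
      (fun y => g (1 - y)) := by
    have h1 : ∀ᵐ y ∂(volume.restrict (Set.Ioc (F u) (F v))), y ≠ 1 :=
      ae_restrict_of_ae (by simp [ae_iff])
    filter_upwards [h1, ae_restrict_mem measurableSet_Ioc] with y hy hy2
    rw [hg]
    have := hy2.2.trans hv1
    have := lt_of_le_of_ne this hy
    linarith
  have hii : IntervalIntegrable (fun y : ℝ => (1 - y) ^ (c - 1)) volume (F u) (F v) := by
    have := (intervalIntegral.intervalIntegrable_rpow' (a := 1 - F u) (b := 1 - F v)
      (r := c - 1) (by linarith)).comp_sub_left 1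
    simpa using this
  have hint : Integrable (fun y => g (1 - y)) (volume.restrict (Set.Ioc (F u) (F v))) :=
    ((intervalIntegrable_iff_integrableOn_Ioc_of_le hle).1 hii).congr hae
  have hfm : AEMeasurable (fun x => ENNReal.ofReal (f x)) (volume.restrict (Set.Ioc u v)) :=
    hfi.aemeasurable.ennreal_ofReal.restrict
  have hft : ∀ᵐ x ∂(volume.restrict (Set.Ioc u v)), ENNReal.ofReal (f x) < ⊤ :=
    ae_of_all _ (fun x => ENNReal.ofReal_lt_top)
  have hint' := hint
  rw [← hmap] at hint'
  have hsm := hint'.aestronglyMeasurable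
  have h3 := (integrable_map_measure hsm hcont.aemeasurable).1 hint'
  rw [integrable_withDensity_iff_integrable_smul₀' hfm hft] at h3
  simp only [ENNReal.toReal_ofReal (hf0 _), smul_eq_mul, Function.comp] at h3
  refine ⟨IntegrableOn.mono_set h3 Set.Ioo_subset_Ioc_self, ?_⟩
  rw [← integral_Ioc_eq_integral_Ioo]
  have h4 := integral_map hcont.aemeasurable hsm
  rw [integral_withDensity_eq_integral_toReal_smul₀ hfm hft] at h4
  simp only [ENNReal.toReal_ofReal (hf0 _), smul_eq_mul] at h4
  rw [← h4, hmap, ← integral_congr_ae hae, ← intervalIntegral.integral_of_le hle,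
    intervalIntegral.integral_comp_sub_left (fun y => y ^ (c - 1)),
    integral_rpow (Or.inl (by linarith))]
  simp

lemma bcc_fubini (h : ℕ → ℝ → ℝ) (n : ℕ) (T X : ℝ)
    (hint : ∀ j, IntegrableOn (h j) (Set.Ioo T X)) :
    ∫ x in {x : Fin (n + 1) → ℝ | StrictMono x ∧ ∀ i, T < x i ∧ x i < X},
        ∏ j : Fin (n + 1), h j.1 (x j) =
    ∫ t in Set.Ioo T X, h 0 t *
      ∫ y in {x : Fin n → ℝ | StrictMono x ∧ ∀ i, t < x i ∧ x i < X},
        ∏ j : Fin n, h (j.1 + 1) (y j) := by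
  have hmeas : ∀ (k : ℕ) (t : ℝ),
      MeasurableSet {x : Fin k → ℝ | StrictMono x ∧ ∀ i, t < x i ∧ x i < X} := by
    intro k t
    have : {x : Fin k → ℝ | StrictMono x ∧ ∀ i, t < x i ∧ x i < X} =
        (⋂ (i : Fin k) (j : Fin k) (_ : i < j), {x | x i < x j}) ∩
          ⋂ i : Fin k, ({x | t < x i} ∩ {x | x i < X}) := by
      ext x
      simp [StrictMono]
    rw [this]
    refine MeasurableSet.inter ?_ ?_
    · refine MeasurableSet.iInter fun i => MeasurableSet.iInter fun j =>
        MeasurableSet.iInter fun _ => measurableSet_lt (by fun_prop) (by fun_prop)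
    · exact MeasurableSet.iInter fun i => (measurableSet_lt (by fun_prop) (by fun_prop)).inter
        (measurableSet_lt (by fun_prop) (by fun_prop))
  have hcons : ∀ (t : ℝ) (y : Fin n → ℝ),
      ((Fin.cons t y : Fin (n + 1) → ℝ) ∈
        {x : Fin (n + 1) → ℝ | StrictMono x ∧ ∀ i, T < x i ∧ x i < X}) ↔
      (t ∈ Set.Ioo T X ∧ y ∈ {x : Fin n → ℝ | StrictMono x ∧ ∀ i, t < x i ∧ x i < X}) := by
    intro t y
    simp only [Set.mem_ofPred_eq, Fin.strictMono_cons, Fin.forall_fin_succ, Fin.cons_zero,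
      Fin.cons_succ, Set.mem_Ioo]
    constructor
    · rintro ⟨⟨h1, h2⟩, h3, h4⟩
      exact ⟨h3, h2, fun i => ⟨h1 i, (h4 i).2⟩⟩
    · rintro ⟨h3, h2, h4⟩
      exact ⟨⟨fun i => (h4 i).1, h2⟩, h3, fun i => ⟨h3.1.trans (h4 i).1, (h4 i).2⟩⟩
  have hI : IntegrableOn (fun x : Fin (n + 1) → ℝ => ∏ j : Fin (n + 1), h j.1 (x j))
      {x : Fin (n + 1) → ℝ | StrictMono x ∧ ∀ i, T < x i ∧ x i < X} := by
    have h1 : IntegrableOn (fun x : Fin (n + 1) → ℝ => ∏ j : Fin (n + 1), h j.1 (x j))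
        (Set.univ.pi fun _ => Set.Ioo T X) := by
      unfold IntegrableOn
      rw [volume_pi, Measure.restrict_pi_pi]
      exact Integrable.fintype_prod (f := fun (j : Fin (n + 1)) => h j.1)
        (fun j => hint j.1)
    refine h1.mono_set ?_
    rintro x ⟨-, hx⟩ i -
    exact hx i
  rw [← integrable_indicator_iff (hmeas _ _)] at hI
  rw [← integral_indicator (hmeas _ _)]
  have mp := (volume_preserving_piFinSuccAbove (fun _ : Fin (n + 1) => ℝ) 0).symm
  have hI2 := (mp.integrable_comp_emb (MeasurableEquiv.measurableEmbedding _)).2 hI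
  rw [← mp.integral_comp (MeasurableEquiv.measurableEmbedding _)]
  rw [Measure.volume_eq_prod] at hI2 ⊢
  refine (integral_prod _ hI2).trans ?_
  rw [← integral_indicator measurableSet_Ioo]
  congr 1
  funext t
  have hsym : ∀ y : Fin n → ℝ,
      (MeasurableEquiv.piFinSuccAbove (fun _ : Fin (n + 1) => ℝ) 0).symm (t, y)
        = (Fin.cons t y : Fin (n + 1) → ℝ) := by
    intro y
    simp [MeasurableEquiv.piFinSuccAbove, Fin.insertNthEquiv]
  simp only [Function.comp, hsym]
  by_cases ht : t ∈ Set.Ioo T X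
  · rw [Set.indicator_of_mem ht, ← integral_indicator (hmeas _ _), ← integral_const_mul]
    congr 1
    funext y
    by_cases hy : y ∈ {x : Fin n → ℝ | StrictMono x ∧ ∀ i, t < x i ∧ x i < X}
    · rw [Set.indicator_of_mem ((hcons t y).2 ⟨ht, hy⟩), Set.indicator_of_mem hy,
        Fin.prod_univ_succ]
      simp
    · rw [Set.indicator_of_notMem (fun H => hy ((hcons t y).1 H).2),
        Set.indicator_of_notMem hy, mul_zero]
  · rw [Set.indicator_of_notMem ht]
    have : ∀ y : Fin n → ℝ, Set.indicator
        {x : Fin (n + 1) → ℝ | StrictMono x ∧ ∀ i, T < x i ∧ x i < X}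
        (fun x : Fin (n + 1) → ℝ => ∏ j : Fin (n + 1), h j.1 (x j))
        (Fin.cons t y : Fin (n + 1) → ℝ) = 0 := fun y =>
      Set.indicator_of_notMem (fun H => ht ((hcons t y).1 H).1) _
    simp only [this, integral_zero]

lemma bcc_prod_erase (m i : ℕ) (g : ℕ → ℝ) :
    ∏ j ∈ (Finset.range (m + 1 + i)).erase m, g j =
      (∏ j ∈ Finset.range m, g j) * ∏ j ∈ Finset.range i, g (m + 1 + j) := by
  have h1 : ∏ j ∈ (Finset.range (m + 1 + i)).erase m, g j =
      ∏ j ∈ Finset.range (m + 1 + i), (if j = m then 1 else g j) := by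
    rw [← Finset.prod_erase (s := Finset.range (m + 1 + i)) (a := m)
      (f := fun j => if j = m then 1 else g j) (by simp)]
    refine Finset.prod_congr rfl fun j hj => ?_
    rw [if_neg (Finset.ne_of_mem_erase hj)]
  rw [h1, Finset.prod_range_add, Finset.prod_range_succ]
  simp only [if_true, mul_one]
  congr 1
  · refine Finset.prod_congr rfl fun j hj => ?_
    rw [if_neg (Finset.mem_range.1 hj).ne]
  · refine Finset.prod_congr rfl fun j hj => ?_
    rw [if_neg (by omega)]

lemma bcc_lagrange (S : ℕ → ℝ) (hS : StrictMono S) (n : ℕ) :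
    ∑ m ∈ Finset.range (n + 2), 1 / ∏ j ∈ (Finset.range (n + 2)).erase m, (S m - S j) = 0 := by
  have h := Lagrange.coeff_eq_sum (s := Finset.range (n + 2)) (v := S) hS.injective.injOn
    (P := (1 : Polynomial ℝ)) (by
      rw [Polynomial.degree_one, Finset.card_range]; norm_cast; omega)
  simp only [Polynomial.eval_one] at h
  rw [← h]
  simp [Polynomial.coeff_one]

lemma bcc_main (f : ℝ → ℝ) (hf0 : ∀ x, 0 ≤ f x) (hfi : Integrable f)
    (hf1 : ∫ x, f x = 1)
    (F : ℝ → ℝ) (hF : ∀ x, F x = ∫ t in Set.Iic x, f t) (X : ℝ) (n : ℕ) :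
    ∀ (S : ℕ → ℝ) (_ : StrictMono S) (T : ℝ) (_ : T < X),
    ∫ x in {x : Fin n → ℝ | StrictMono x ∧ ∀ i, T < x i ∧ x i < X},
        ∏ j : Fin n, f (x j) * (1 - F (x j)) ^ (S (j.1 + 1) - S j.1 - 1) =
      ∑ m ∈ Finset.range (n + 1),
        1 / (∏ j ∈ (Finset.range (n + 1)).erase m, (S m - S j)) *
          (1 - F X) ^ (S n - S m) * (1 - F T) ^ (S m - S 0) := by
  induction n with
  | zero =>
    intro S hS T hT
    have : {x : Fin 0 → ℝ | StrictMono x ∧ ∀ i, T < x i ∧ x i < X} = Set.univ := by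
      ext x
      simp [Subsingleton.strictMono]
    rw [this]
    simp [Measure.real, volume_pi, Measure.pi_of_empty]
  | succ n ih =>
    intro S hS T hT
    have hX0 : 0 ≤ 1 - F X := sub_nonneg.2 (bcc_F_le_one f hf0 hfi hf1 F hF X)
    rw [bcc_fubini (fun j x => f x * (1 - F x) ^ (S (j + 1) - S j - 1)) n T X (fun j =>
      (bcc_one_dim f hf0 hfi hf1 F hF T X hT.le (S (j + 1) - S j)
        (sub_pos.2 (hS (Nat.lt_succ_self j))) (fun y => y ^ (S (j + 1) - S j - 1))
        (fun _ _ => rfl)).1)]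
    have hstep : ∀ m, _ := fun m => bcc_one_dim f hf0 hfi hf1 F hF T X hT.le (S (m + 1) - S 0)
      (sub_pos.2 (hS (Nat.succ_pos m)))
      (fun y => y ^ (S 1 - S 0 - 1) * y ^ (S (m + 1) - S 1)) (fun y hy => by
        rw [← Real.rpow_add hy]; congr 1; ring)
    have e1 : ∀ t ∈ Set.Ioo T X, (f t * (1 - F t) ^ (S (0 + 1) - S 0 - 1)) *
        (∫ y in {x : Fin n → ℝ | StrictMono x ∧ ∀ i, t < x i ∧ x i < X},
          ∏ j : Fin n, f (y j) * (1 - F (y j)) ^ (S (j.1 + 1 + 1) - S (j.1 + 1) - 1)) =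
        ∑ m ∈ Finset.range (n + 1),
        (1 / (∏ j ∈ (Finset.range (n + 1)).erase m, (S (m + 1) - S (j + 1))) *
          (1 - F X) ^ (S (n + 1) - S (m + 1))) *
          (f t * ((1 - F t) ^ (S 1 - S 0 - 1) * (1 - F t) ^ (S (m + 1) - S 1))) := by
      intro t ht
      rw [ih (fun k => S (k + 1)) (fun a b hab => hS (by omega)) t ht.2, Finset.mul_sum]
      refine Finset.sum_congr rfl fun m _ => ?_
      simp only [zero_add]
      ring
    rw [setIntegral_congr_fun measurableSet_Ioo e1,
      integral_finsetSum _ (fun m _ => (hstep m).1.const_mul _)]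
    simp only [integral_const_mul, (hstep _).2]
    have key : ∀ m, ∏ j ∈ (Finset.range (n + 1 + 1)).erase (m + 1), (S (m + 1) - S j) =
        (S (m + 1) - S 0) *
          ∏ j ∈ (Finset.range (n + 1)).erase m, (S (m + 1) - S (j + 1)) := by
      intro m
      have : (Finset.range (n + 1 + 1)).erase (m + 1) =
          insert 0 (((Finset.range (n + 1)).erase m).map ⟨fun j => j + 1, add_left_injective 1⟩) := by
        ext j
        cases j <;> simp
      rw [this, Finset.prod_insert (by simp), Finset.prod_map]
      rfl
    have hl := bcc_lagrange S hS n
    rw [Finset.sum_range_succ'] at hl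
    rw [Finset.sum_range_succ' _ (n + 1)]
    have hz : 1 / ∏ j ∈ (Finset.range (n + 1 + 1)).erase 0, (S 0 - S j) =
      - ∑ m ∈ Finset.range (n + 1),
        1 / ∏ j ∈ (Finset.range (n + 1 + 1)).erase (m + 1), (S (m + 1) - S j) := by
      linarith
    rw [hz, neg_mul, neg_mul, Finset.sum_mul, Finset.sum_mul, ← sub_eq_add_neg,
      ← Finset.sum_sub_distrib]
    refine Finset.sum_congr rfl fun m hm => ?_
    have hmn : m + 1 ≤ n + 1 := by have := Finset.mem_range.1 hm; omega
    have hXX : (1 - F X) ^ (S (n + 1) - S 0) =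
        (1 - F X) ^ (S (n + 1) - S (m + 1)) * (1 - F X) ^ (S (m + 1) - S 0) := by
      rw [← Real.rpow_add_of_nonneg hX0 (sub_nonneg.2 (hS.monotone hmn))
        (sub_nonneg.2 (hS.monotone (Nat.zero_le _)))]
      congr 1; ring
    rw [key, hXX, sub_self, Real.rpow_zero, one_div, one_div, mul_inv]
    ring

theorem balakrishnan_childs_chandrasekar_lemma
    (f : ℝ → ℝ) (hf0 : ∀ x, 0 ≤ f x) (hfi : Integrable f)
    (hf1 : ∫ x, f x = 1)
    (F : ℝ → ℝ) (hF : ∀ x, F x = ∫ t in Set.Iic x, f t)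
    (r : ℕ) (hr : 1 ≤ r) (a : ℕ → ℝ) (ha : ∀ j ∈ Finset.Icc 1 r, 0 < a j)
    (T X : ℝ) (hTX : T < X) :
    ∫ x in {x : Fin r → ℝ | StrictMono x ∧ ∀ i, T < x i ∧ x i < X},
        ∏ j : Fin r, f (x j) * (1 - F (x j)) ^ (a (j.1 + 1) - 1) =
      ∑ i ∈ Finset.range (r + 1),
        ((-1 : ℝ) ^ i /
            ((∏ j ∈ Finset.Icc 1 i, ∑ k ∈ Finset.Icc (r - i + 1) (r - i + j), a k) *
              (∏ j ∈ Finset.Icc 1 (r - i), ∑ k ∈ Finset.Icc j (r - i), a k))) *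
          (1 - F X) ^ (∑ j ∈ Finset.Icc (r - i + 1) r, a j) *
          (1 - F T) ^ (∑ j ∈ Finset.Icc 1 (r - i), a j) := by
  obtain ⟨b, hb⟩ : ∃ b : ℕ → ℝ, b = fun j => if j ∈ Finset.Icc 1 r then a j else 1 := ⟨_, rfl⟩
  have hb0 : ∀ j, 0 < b j := by
    intro j
    rw [hb]
    dsimp only
    split_ifs with h
    · exact ha j h
    · exact one_pos
  have hba : ∀ j, 1 ≤ j → j ≤ r → b j = a j := by
    intro j h1 h2
    rw [hb]
    simp [h1, h2]
  obtain ⟨S, hSd⟩ : ∃ S : ℕ → ℝ, S = fun n => ∑ k ∈ Finset.range n, b (k + 1) := ⟨_, rfl⟩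
  have hSs : ∀ n, S (n + 1) - S n = b (n + 1) := by
    intro n
    rw [hSd]
    simp [Finset.sum_range_succ]
  have hS : StrictMono S := strictMono_nat_of_lt_succ fun n => by
    have := hSs n
    have := hb0 (n + 1)
    linarith
  have hsum : ∀ p q, p ≤ q → q ≤ r → ∑ k ∈ Finset.Icc (p + 1) q, a k = S q - S p := by
    intro p q hpq
    induction q, hpq using Nat.le_induction with
    | base => intro _; simp
    | succ q hpq ih =>
      intro hq
      rw [Finset.sum_Icc_succ_top (by omega), ih (by omega), ← hba (q + 1) (by omega) hq,
        ← hSs q]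
      ring
  have hmain := bcc_main f hf0 hfi hf1 F hF X r S hS T hTX
  have hL : ∀ x : Fin r → ℝ, ∏ j : Fin r, f (x j) * (1 - F (x j)) ^ (a (j.1 + 1) - 1) =
      ∏ j : Fin r, f (x j) * (1 - F (x j)) ^ (S (j.1 + 1) - S j.1 - 1) := by
    intro x
    refine Finset.prod_congr rfl fun j _ => ?_
    rw [hSs, hba _ (by omega) (by omega)]
  simp only [hL]
  rw [hmain, ← Finset.sum_range_reflect]
  refine Finset.sum_congr rfl fun i hi => ?_
  have hir : i ≤ r := by have := Finset.mem_range.1 hi; omega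
  obtain ⟨m, rfl⟩ : ∃ m, r = m + i := ⟨r - i, by omega⟩
  have e0 : m + i + 1 - 1 - i = m := by omega
  have e1 : m + i - i = m := by omega
  rw [e0, e1, hsum m (m + i) (by omega) le_rfl]
  have e2 := hsum 0 m (by omega) (by omega)
  rw [zero_add] at e2
  rw [e2]
  congr 2
  have e3 : m + i + 1 = m + 1 + i := by omega
  rw [e3, bcc_prod_erase]
  have p1 : ∏ j ∈ Finset.Icc 1 i, ∑ k ∈ Finset.Icc (m + 1) (m + j), a k =
      ∏ j ∈ Finset.range i, (S (m + 1 + j) - S m) := by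
    refine (Finset.prod_bij (fun j _ => j + 1) ?_ ?_ ?_ ?_).symm
    · intro j hj
      have := Finset.mem_range.1 hj
      exact Finset.mem_Icc.2 ⟨by omega, by omega⟩
    · intro j _ k _ h
      omega
    · intro j hj
      have := Finset.mem_Icc.1 hj
      exact ⟨j - 1, Finset.mem_range.2 (by omega), by omega⟩
    · intro j hj
      have := Finset.mem_range.1 hj
      rw [hsum m (m + (j + 1)) (by omega) (by omega), show m + (j + 1) = m + 1 + j by omega]
  have p2 : ∏ j ∈ Finset.Icc 1 m, ∑ k ∈ Finset.Icc j m, a k =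
      ∏ j ∈ Finset.range m, (S m - S j) := by
    refine (Finset.prod_bij (fun j _ => j + 1) ?_ ?_ ?_ ?_).symm
    · intro j hj
      have := Finset.mem_range.1 hj
      exact Finset.mem_Icc.2 ⟨by omega, by omega⟩
    · intro j _ k _ h
      omega
    · intro j hj
      have := Finset.mem_Icc.1 hj
      exact ⟨j - 1, Finset.mem_range.2 (by omega), by omega⟩
    · intro j hj
      have := Finset.mem_range.1 hj
      rw [hsum j m (by omega) (by omega)]
  have p3 : ∏ j ∈ Finset.range i, (S m - S (m + 1 + j)) =
      (-1) ^ i * ∏ j ∈ Finset.range i, (S (m + 1 + j) - S m) := by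
    rw [← Finset.card_range i, ← Finset.prod_const, Finset.card_range, ← Finset.prod_mul_distrib]
    refine Finset.prod_congr rfl fun j _ => ?_
    ring
  rw [p1, p2, p3]
  have hsq : ((-1 : ℝ) ^ i)⁻¹ = (-1) ^ i := by rw [← inv_pow]; norm_num
  rw [one_div, mul_inv, mul_inv, hsq, div_eq_mul_inv, mul_inv]
  ring
end
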